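/- (i) There is C > 0 such that |(εψ_n)(x)| ≤ C for every integer n ≥ 1 and every x ∈ ℝ. (ii) For every a ∈ ℝ there is C_a > 0 such that |∫_a^x ψ_n(y) dy| ≤ C_a for every integer n ≥ 1 and every x ∈ ℝ. -/

import Mathlib

open MeasureTheory Filter Set

noncomputable section

/-- The Airy function `Ai(x) = (1/π)·lim_{b→∞} ∫_0^b cos(t³/3 + x·t) dt`. -/
def Ai (x : ℝ) : ℝ :=
  (1 / Real.pi) *
    limUnder Filter.atTop (fun b : ℝ => ∫ t in (0:ℝ)..b, Real.cos (t ^ 3 / 3 + x * t))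

/-- The Airy kernel. -/
def KAi (x y : ℝ) : ℝ :=
  if x = y then (deriv Ai x) ^ 2 - x * (Ai x) ^ 2
  else (Ai x * deriv Ai y - deriv Ai x * Ai y) / (x - y)

/-- One-point correlation function of the Airy₂ random point field. -/
def rho (x : ℝ) : ℝ := (deriv Ai x) ^ 2 - x * (Ai x) ^ 2

/-- Probabilists' Hermite polynomial `Ĥ_m(x) = (−1)^m e^{x²/2} (d/dx)^m e^{−x²/2}`. -/
def hermiteP (m : ℕ) (x : ℝ) : ℝ :=
  (-1 : ℝ) ^ m * Real.exp (x ^ 2 / 2) * iteratedDeriv m (fun t => Real.exp (-t ^ 2 / 2)) x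

/-- Normalized oscillator function `φ_m`. -/
def osc (m : ℕ) (x : ℝ) : ℝ :=
  (2 * Real.pi) ^ (-(1:ℝ)/4) * ((m.factorial : ℝ)) ^ (-(1:ℝ)/2) *
    Real.exp (-x ^ 2 / 4) * hermiteP m x

/-- `ψ_mⁿ(x) = n^{1/12}·φ_m(2√n + n^{−1/6}·x)`. -/
def psiUp (n m : ℕ) (x : ℝ) : ℝ :=
  (n : ℝ) ^ ((1:ℝ)/12) * osc m (2 * Real.sqrt n + (n : ℝ) ^ (-(1:ℝ)/6) * x)

/-- `ψ_n = ψ_nⁿ`. -/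
def psiN (n : ℕ) : ℝ → ℝ := psiUp n n

/-- The finite-`n` Airy kernel. -/
def KAiN (n : ℕ) (x y : ℝ) : ℝ :=
  if x = y then
    (deriv (psiN n) x) ^ 2 - psiN n x * deriv (deriv (psiN n)) x
      - (1 / (2 * (n : ℝ) ^ ((1:ℝ)/3))) * (psiN n x) ^ 2
  else
    (psiN n x * deriv (psiN n) y - deriv (psiN n) x * psiN n y) / (x - y)
      - (1 / (2 * (n : ℝ) ^ ((1:ℝ)/3))) * (psiN n x * psiN n y)

/-- `(εf)(x) = (1/2)·∫_ℝ sign(x − y)·f(y) dy`. -/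
def epsF (f : ℝ → ℝ) (x : ℝ) : ℝ := (1/2) * ∫ y : ℝ, Real.sign (x - y) * f y

/-- `εψ_n`. -/
def epsPsi (n : ℕ) : ℝ → ℝ := epsF (psiN n)

/-- `J₁(x,y) = K_Ai(x,y) + (1/2)·Ai(x)·(1 − ∫_y^∞ Ai(u) du)`. -/
def J1 (x y : ℝ) : ℝ := KAi x y + (1/2) * Ai x * (1 - ∫ u in Set.Ioi y, Ai u)

/-- Scalar part of the quaternion product of Airy₁ kernels. -/
def L1 (x y : ℝ) : ℝ :=
  J1 x y * J1 y x -
    deriv (fun v => J1 x v) y * ((∫ u in x..y, J1 u x) - (1/2) * Real.sign (y - x))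

/-- `J₁ⁿ(x,y) = K_Aiⁿ(x,y) + (1/2)·ψ_{n−1}ⁿ(x)·(εψ_n)(y)`. -/
def J1N (n : ℕ) (x y : ℝ) : ℝ :=
  KAiN n x y + (1/2) * psiUp n (n - 1) x * epsPsi n y

/-- Scalar part of the quaternion product of finite-`n` Airy₁ kernels. -/
def L1N (n : ℕ) (x y : ℝ) : ℝ :=
  J1N n x y * J1N n y x -
    deriv (fun v => J1N n x v) y * ((∫ u in x..y, J1N n u x) - (1/2) * Real.sign (y - x))

/-- `ρ̂(x) = (1/π)·√(−x)` for `x < 0`, and `0` otherwise. -/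
def rhoHat (x : ℝ) : ℝ := if x < 0 then Real.sqrt (-x) / Real.pi else 0

/-- `ρ̂ⁿ(x) = (1/π)·√(−x·(1 + x/(4·n^{2/3})))` on `(−4n^{2/3}, 0)`, and `0` otherwise. -/
def rhoHatN (n : ℕ) (x : ℝ) : ℝ :=
  if -(4 * (n : ℝ) ^ ((2:ℝ)/3)) < x ∧ x < 0 then
    Real.sqrt (-x * (1 + x / (4 * (n : ℝ) ^ ((2:ℝ)/3)))) / Real.pi
  else 0

/-- `G_{a,b,c}(x,y) = |x|^{−a}·|y|^{−b}·|x−y|^{−c}`. -/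
def Gf (a b c : ℝ) (x y : ℝ) : ℝ := |x| ^ (-a) * |y| ^ (-b) * |x - y| ^ (-c)

/-- `Ĝ_{a,b,c}(x,y) = G_{a,b,c}(x,y) + G_{a,b,c}(y,x)`. -/
def Ghat (a b c : ℝ) (x y : ℝ) : ℝ := Gf a b c x y + Gf a b c y x

/-- Soft-edge one-point correlation function of the `n`-point GUE ensemble. -/
def rhoN (n : ℕ) (x : ℝ) : ℝ :=
  (deriv (psiN n) x) ^ 2 - (x ^ 2 / (4 * (n : ℝ) ^ ((2:ℝ)/3)) + x) * (psiN n x) ^ 2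

end

/-!
`ψ_n` solves `f'' = -q f` for a concave quadratic `q` that is symmetric about the centre
`-2 n^{2/3}`, decreases to the right of it, and changes sign near `0`.

* Where `q ≥ 1`, put `a = q^{-1/2}`. The corrected adiabatic invariant `f²/a + a f'² - a' f f'` has
  derivative `-a'' f f'`, so the total variation of `a'`, which is at most `1/2`, controls its
  growth, and `f` and `f'/q` stay bounded. The primitive `F` of `f` is then bounded because
  `F + f'/q - (1/q)' f` has derivative `-(1/q)'' f`, whose weight `(1/q)''` is nonnegative and has
  total mass at most `1`.
* Across the turning point `q` is bounded, and Grönwall's inequality applies.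
* Where `q ≤ -1`, decay at infinity forces `f f' ≤ 0`, so `|f'|` decreases, and one integration by
  parts in `f = -f''/q` bounds `F`.

The values at the centre come from `H_{n+2}(0) = -(n+1) H_n(0)`, the left half follows by parity,
and `εψ_n` is half the difference of the integrals of `ψ_n` over two half-lines.
-/

open Polynomial Topology

section Calculus

variable {E : Type*} [NormedAddCommGroup E] [NormedSpace ℝ E] {x₀ x₁ : ℝ}

lemma norm_sub_le_sub_of_norm_deriv_le {f f' : ℝ → E} {B B' : ℝ → ℝ} (hx : x₀ ≤ x₁)
    (hf : ∀ x ∈ Icc x₀ x₁, HasDerivAt f (f' x) x) (hB : ∀ x ∈ Icc x₀ x₁, HasDerivAt B (B' x) x)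
    (h : ∀ x ∈ Icc x₀ x₁, ‖f' x‖ ≤ B' x) : ‖f x₁ - f x₀‖ ≤ B x₁ - B x₀ := by
  have hf₀ : ∀ x ∈ Icc x₀ x₁, HasDerivAt (fun y => f y - f x₀) (f' x) x :=
    fun x hx => (hf x hx).sub_const _
  have hB₀ : ∀ x ∈ Icc x₀ x₁, HasDerivAt (fun y => B y - B x₀) (B' x) x :=
    fun x hx => (hB x hx).sub_const _
  exact image_norm_le_of_norm_deriv_right_le_deriv_boundary'
    (HasDerivAt.continuousOn hf₀) (fun x hx => (hf₀ x (Ico_subset_Icc_self hx)).hasDerivWithinAt)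
    (by simp) (HasDerivAt.continuousOn hB₀)
    (fun x hx => (hB₀ x (Ico_subset_Icc_self hx)).hasDerivWithinAt)
    (fun x hx => h x (Ico_subset_Icc_self hx)) (right_mem_Icc.2 hx)

lemma norm_sub_le_mul_sub_of_norm_deriv_le {f f' : ℝ → E} {C : ℝ} (hx : x₀ ≤ x₁)
    (hf : ∀ x ∈ Icc x₀ x₁, HasDerivAt f (f' x) x) (h : ∀ x ∈ Icc x₀ x₁, ‖f' x‖ ≤ C) :
    ‖f x₁ - f x₀‖ ≤ C * (x₁ - x₀) :=
  norm_image_sub_le_of_norm_deriv_le_segment' (fun x hx => (hf x hx).hasDerivWithinAt)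
    (fun x hx => h x (Ico_subset_Icc_self hx)) x₁ (right_mem_Icc.2 hx)

lemma antitoneOn_of_hasDerivAt_nonpos {f f' : ℝ → ℝ} {s : Set ℝ} (hs : Convex ℝ s)
    (hf : ∀ x ∈ s, HasDerivAt f (f' x) x) (h : ∀ x ∈ s, f' x ≤ 0) : AntitoneOn f s :=
  antitoneOn_of_hasDerivWithinAt_nonpos hs (HasDerivAt.continuousOn hf)
    (fun x hx => (hf x (interior_subset hx)).hasDerivWithinAt) fun x hx => h x (interior_subset hx)

end Calculus

/-- `f` solves `f'' = -q f` on `s`, written as a first-order system with `g = f'`. -/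
structure IsSolutionOn (q f g : ℝ → ℝ) (s : Set ℝ) : Prop where
  hasDerivAt : ∀ x ∈ s, HasDerivAt f (g x) x
  hasDerivAt_deriv : ∀ x ∈ s, HasDerivAt g (-q x * f x) x

lemma IsSolutionOn.mono {q f g : ℝ → ℝ} {s t : Set ℝ} (h : IsSolutionOn q f g t) (hst : s ⊆ t) :
    IsSolutionOn q f g s :=
  ⟨fun x hx => h.hasDerivAt x (hst hx), fun x hx => h.hasDerivAt_deriv x (hst hx)⟩

/-- `a` is a WKB amplitude `q^{-1/2}` of the equation `f'' = -q f` on `s`, with first and second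
derivatives `b` and `c`, that is nondecreasing, convex and of slope at most `1/2`. -/
structure IsSlowAmplitudeOn (q a b c : ℝ → ℝ) (s : Set ℝ) : Prop where
  pos : ∀ x ∈ s, 0 < a x
  sq_mul : ∀ x ∈ s, a x ^ 2 * q x = 1
  hasDerivAt : ∀ x ∈ s, HasDerivAt a (b x) x
  hasDerivAt_deriv : ∀ x ∈ s, HasDerivAt b (c x) x
  deriv_nonneg : ∀ x ∈ s, 0 ≤ b x
  deriv_le : ∀ x ∈ s, b x ≤ 1 / 2
  deriv_deriv_nonneg : ∀ x ∈ s, 0 ≤ c x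

/-- The adiabatic invariant `f²/a + a g²` of `f'' = -a⁻² f`, where `g = f'`. -/
noncomputable def wkbEnergy (a f g : ℝ → ℝ) (x : ℝ) : ℝ := f x ^ 2 / a x + a x * g x ^ 2

/-- The adiabatic invariant with its first correction `-b f g`, where `b = a'`. -/
noncomputable def correctedEnergy (a b f g : ℝ → ℝ) (x : ℝ) : ℝ :=
  wkbEnergy a f g x - b x * (f x * g x)

/-- A primitive `F` of a solution `f` of `f'' = -p⁻¹ f` with its first WKB correction, where
`g = f'`. -/
noncomputable def correctedPrimitive (p p' F f g : ℝ → ℝ) (x : ℝ) : ℝ :=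
  F x + p x * g x - p' x * f x

section WKB

variable {q a b c F f g : ℝ → ℝ} {s : Set ℝ} {x x₀ x₁ M : ℝ}

lemma two_mul_abs_mul_le_wkbEnergy (ha : 0 < a x) : 2 * |f x * g x| ≤ wkbEnergy a f g x := by
  have hsq : wkbEnergy a f g x - 2 * |f x * g x| = (|f x| - a x * |g x|) ^ 2 / a x := by
    rw [wkbEnergy, abs_mul, ← sq_abs (f x), ← sq_abs (g x)]
    field_simp
    ring
  have : 0 ≤ (|f x| - a x * |g x|) ^ 2 / a x := by positivity
  linarith

lemma abs_le_of_wkbEnergy_le (ha : 0 < a x) (ha₁ : a x ≤ 1) (hM : 0 ≤ M)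
    (h : wkbEnergy a f g x ≤ M ^ 2) : |f x| ≤ M ∧ |a x ^ 2 * g x| ≤ M := by
  have hf : 0 ≤ f x ^ 2 / a x := by positivity
  have hg : 0 ≤ a x * g x ^ 2 := by positivity
  rw [wkbEnergy] at h
  constructor <;> refine abs_le_of_sq_le_sq ?_ hM
  · calc f x ^ 2 ≤ f x ^ 2 / a x := le_div_self (sq_nonneg _) ha ha₁
      _ ≤ M ^ 2 := by linarith
  · calc (a x ^ 2 * g x) ^ 2 = a x ^ 3 * (a x * g x ^ 2) := by ring
      _ ≤ a x * g x ^ 2 := mul_le_of_le_one_left hg (pow_le_one₀ ha.le ha₁)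
      _ ≤ M ^ 2 := by linarith

namespace IsSlowAmplitudeOn

variable (ha : IsSlowAmplitudeOn q a b c s)
include ha

lemma mono {t : Set ℝ} (hts : t ⊆ s) : IsSlowAmplitudeOn q a b c t :=
  ⟨fun x hx => ha.pos x (hts hx), fun x hx => ha.sq_mul x (hts hx),
    fun x hx => ha.hasDerivAt x (hts hx), fun x hx => ha.hasDerivAt_deriv x (hts hx),
    fun x hx => ha.deriv_nonneg x (hts hx), fun x hx => ha.deriv_le x (hts hx),
    fun x hx => ha.deriv_deriv_nonneg x (hts hx)⟩

lemma abs_correctedEnergy_sub_le (hx : x ∈ s) :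
    |correctedEnergy a b f g x - wkbEnergy a f g x| ≤ wkbEnergy a f g x / 4 := by
  have hfg := two_mul_abs_mul_le_wkbEnergy (f := f) (g := g) (ha.pos x hx)
  rw [correctedEnergy, sub_sub_cancel_left, abs_neg, abs_mul, abs_of_nonneg (ha.deriv_nonneg x hx)]
  nlinarith [ha.deriv_le x hx, abs_nonneg (f x * g x)]

lemma correctedEnergy_nonneg (hx : x ∈ s) : 0 ≤ correctedEnergy a b f g x := by
  have hE := ha.abs_correctedEnergy_sub_le (f := f) (g := g) hx
  linarith [abs_nonneg (correctedEnergy a b f g x - wkbEnergy a f g x), (abs_le.1 hE).1]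

lemma hasDerivAt_correctedEnergy (hf : IsSolutionOn q f g s) (hx : x ∈ s) :
    HasDerivAt (correctedEnergy a b f g) (-(c x * (f x * g x))) x := by
  have ha₀ := (ha.pos x hx).ne'
  have hq : q x = (a x ^ 2)⁻¹ := eq_inv_of_mul_eq_one_right (ha.sq_mul x hx)
  have hda := ha.hasDerivAt x hx
  have hdf := hf.hasDerivAt x hx
  have hdg := hf.hasDerivAt_deriv x hx
  refine ((((hdf.fun_pow 2).fun_div hda ha₀).fun_add (hda.fun_mul (hdg.fun_pow 2))).fun_sub
    ((ha.hasDerivAt_deriv x hx).fun_mul (hdf.fun_mul hdg))).congr_deriv ?_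
  rw [hq]
  field_simp
  ring

lemma antitoneOn_correctedEnergy_mul_exp (hf : IsSolutionOn q f g s) (hs : Convex ℝ s) :
    AntitoneOn (fun x => correctedEnergy a b f g x * Real.exp (-(2 / 3 * b x))) s := by
  refine antitoneOn_of_hasDerivAt_nonpos hs (fun x hx =>
    (ha.hasDerivAt_correctedEnergy hf hx).fun_mul
      ((ha.hasDerivAt_deriv x hx).const_mul (2 / 3)).fun_neg.exp) fun x hx => ?_
  have hfg := two_mul_abs_mul_le_wkbEnergy (f := f) (g := g) (ha.pos x hx)
  have hE := (abs_le.1 (ha.abs_correctedEnergy_sub_le (f := f) (g := g) hx)).1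
  have hsum : 0 ≤ f x * g x + 2 / 3 * correctedEnergy a b f g x := by
    linarith [neg_abs_le (f x * g x)]
  have hfactor : -(c x * (f x * g x)) * Real.exp (-(2 / 3 * b x)) +
      correctedEnergy a b f g x * (Real.exp (-(2 / 3 * b x)) * -(2 / 3 * c x)) =
      -(c x * (f x * g x + 2 / 3 * correctedEnergy a b f g x) * Real.exp (-(2 / 3 * b x))) := by
    ring
  rw [hfactor]
  exact neg_nonpos.2 (mul_nonneg (mul_nonneg (ha.deriv_deriv_nonneg x hx) hsum)
    (Real.exp_nonneg _))

lemma wkbEnergy_le (hf : IsSolutionOn q f g s) (hs : Convex ℝ s) (h₀ : x₀ ∈ s) (h₁ : x₁ ∈ s)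
    (h₀₁ : x₀ ≤ x₁) : wkbEnergy a f g x₁ ≤ 5 / 2 * wkbEnergy a f g x₀ := by
  have hanti := ha.antitoneOn_correctedEnergy_mul_exp hf hs h₀ h₁ h₀₁
  have hE₀ := (abs_le.1 (ha.abs_correctedEnergy_sub_le (f := f) (g := g) h₀)).2
  have hE₁ := (abs_le.1 (ha.abs_correctedEnergy_sub_le (f := f) (g := g) h₁)).1
  have hexp₀ : Real.exp (-(2 / 3 * b x₀)) ≤ 1 :=
    Real.exp_le_one_iff.2 (by linarith [ha.deriv_nonneg x₀ h₀])
  have hexp₁ : 2 / 3 ≤ Real.exp (-(2 / 3 * b x₁)) := by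
    linarith [ha.deriv_le x₁ h₁, Real.add_one_le_exp (-(2 / 3 * b x₁))]
  have hE : correctedEnergy a b f g x₁ * (2 / 3) ≤ correctedEnergy a b f g x₀ :=
    calc correctedEnergy a b f g x₁ * (2 / 3)
        ≤ correctedEnergy a b f g x₁ * Real.exp (-(2 / 3 * b x₁)) :=
          mul_le_mul_of_nonneg_left hexp₁ (ha.correctedEnergy_nonneg h₁)
      _ ≤ correctedEnergy a b f g x₀ * Real.exp (-(2 / 3 * b x₀)) := hanti
      _ ≤ correctedEnergy a b f g x₀ := mul_le_of_le_one_right (ha.correctedEnergy_nonneg h₀) hexp₀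
  linarith

end IsSlowAmplitudeOn

lemma isSlowAmplitudeOn_inv_sqrt {q' q'' : ℝ → ℝ} (hq : ∀ x ∈ s, HasDerivAt q (q' x) x)
    (hq' : ∀ x ∈ s, HasDerivAt q' (q'' x) x) (hq₁ : ∀ x ∈ s, 1 ≤ q x)
    (hq'_mem : ∀ x ∈ s, q' x ∈ Icc (-1) 0) (hq'' : ∀ x ∈ s, q'' x ≤ 0) :
    IsSlowAmplitudeOn q (fun x => (√(q x))⁻¹) (fun x => -q' x / 2 * (√(q x))⁻¹ ^ 3)
      (fun x => -q'' x / 2 * (√(q x))⁻¹ ^ 3 + 3 / 4 * q' x ^ 2 * (√(q x))⁻¹ ^ 5) s := by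
  have hpos : ∀ x ∈ s, 0 < √(q x) := fun x hx =>
    Real.sqrt_pos.2 (zero_lt_one.trans_le (hq₁ x hx))
  have hda : ∀ x ∈ s, HasDerivAt (fun x => (√(q x))⁻¹) (-q' x / 2 * (√(q x))⁻¹ ^ 3) x := by
    intro x hx
    have h₀ := (hpos x hx).ne'
    refine (((hq x hx).sqrt (Real.sqrt_pos.1 (hpos x hx)).ne').fun_inv h₀).congr_deriv ?_
    field_simp
  refine ⟨fun x hx => inv_pos.2 (hpos x hx), fun x hx => ?_, hda, fun x hx => ?_, fun x hx => ?_,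
    fun x hx => ?_, fun x hx => ?_⟩
  · have h₀ : 0 < q x := Real.sqrt_pos.1 (hpos x hx)
    rw [inv_pow, Real.sq_sqrt h₀.le, inv_mul_cancel₀ h₀.ne']
  · refine ((((hq' x hx).fun_neg).div_const 2).fun_mul ((hda x hx).fun_pow 3)).congr_deriv ?_
    push_cast
    ring
  · have := (hq'_mem x hx).2
    have : 0 ≤ -q' x / 2 := by linarith
    positivity
  · calc -q' x / 2 * (√(q x))⁻¹ ^ 3 ≤ 1 / 2 * 1 := by
          gcongr
          · linarith [(hq'_mem x hx).1]
          · exact pow_le_one₀ (by positivity)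
              (inv_le_one_of_one_le₀ (Real.one_le_sqrt.2 (hq₁ x hx)))
      _ = 1 / 2 := mul_one _
  · have : 0 ≤ -q'' x / 2 := by linarith [hq'' x hx]
    positivity

lemma abs_correctedPrimitive_sub_le {p p' p'' : ℝ → ℝ} (h₀₁ : x₀ ≤ x₁)
    (hF : ∀ x ∈ Icc x₀ x₁, HasDerivAt F (f x) x) (hf : IsSolutionOn q f g (Icc x₀ x₁))
    (hpq : ∀ x ∈ Icc x₀ x₁, p x * q x = 1) (hp : ∀ x ∈ Icc x₀ x₁, HasDerivAt p (p' x) x)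
    (hp' : ∀ x ∈ Icc x₀ x₁, HasDerivAt p' (p'' x) x) (hp'' : ∀ x ∈ Icc x₀ x₁, 0 ≤ p'' x)
    (hM : ∀ x ∈ Icc x₀ x₁, |f x| ≤ M) :
    |correctedPrimitive p p' F f g x₁ - correctedPrimitive p p' F f g x₀| ≤
      M * p' x₁ - M * p' x₀ := by
  refine norm_sub_le_sub_of_norm_deriv_le (f := correctedPrimitive p p' F f g)
    (f' := fun x => -(p'' x * f x)) (B := fun x => M * p' x) h₀₁ (fun x hx => ?_)
    (fun x hx => (hp' x hx).const_mul M) fun x hx => ?_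
  · refine (((hF x hx).fun_add ((hp x hx).fun_mul (hf.hasDerivAt_deriv x hx))).fun_sub
      ((hp' x hx).fun_mul (hf.hasDerivAt x hx))).congr_deriv ?_
    linear_combination -f x * hpq x hx
  · rw [norm_neg, Real.norm_eq_abs, abs_mul, abs_of_nonneg (hp'' x hx), mul_comm]
    exact mul_le_mul_of_nonneg_right (hM x hx) (hp'' x hx)

lemma IsSlowAmplitudeOn.abs_primitive_sub_le (ha : IsSlowAmplitudeOn q a b c (Icc x₀ x₁))
    (ha₁ : ∀ x ∈ Icc x₀ x₁, a x ≤ 1) (hF : ∀ x ∈ Icc x₀ x₁, HasDerivAt F (f x) x)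
    (hf : ∀ x ∈ Icc x₀ x₁, |f x| ≤ M ∧ |a x ^ 2 * g x| ≤ M)
    (hfg : IsSolutionOn q f g (Icc x₀ x₁)) (h₀₁ : x₀ ≤ x₁) : |F x₁ - F x₀| ≤ 4 * M := by
  have hslope : ∀ x ∈ Icc x₀ x₁, 0 ≤ 2 * a x * b x ∧ 2 * a x * b x ≤ 1 := fun x hx =>
    ⟨mul_nonneg (mul_nonneg zero_le_two (ha.pos x hx).le) (ha.deriv_nonneg x hx),
      by nlinarith [ha.deriv_nonneg x hx, ha.deriv_le x hx, ha₁ x hx]⟩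
  have hincr := abs_correctedPrimitive_sub_le (p := fun x => a x ^ 2)
    (p' := fun x => 2 * a x * b x) (p'' := fun x => 2 * b x * b x + 2 * a x * c x)
    h₀₁ hF hfg ha.sq_mul
    (fun x hx => ((ha.hasDerivAt x hx).fun_pow 2).congr_deriv (by simp))
    (fun x hx => ((ha.hasDerivAt x hx).const_mul 2).fun_mul (ha.hasDerivAt_deriv x hx))
    (fun x hx => by
      have := ha.pos x hx
      have := ha.deriv_nonneg x hx
      have := ha.deriv_deriv_nonneg x hx
      positivity)
    (fun x hx => (hf x hx).1)
  have hslope_mul : ∀ x ∈ Icc x₀ x₁, |2 * a x * b x * f x| ≤ 2 * a x * b x * M := fun x hx => by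
    rw [abs_mul, abs_of_nonneg (hslope x hx).1]
    exact mul_le_mul_of_nonneg_left (hf x hx).1 (hslope x hx).1
  have h₀ : x₀ ∈ Icc x₀ x₁ := left_mem_Icc.2 h₀₁
  have h₁ : x₁ ∈ Icc x₀ x₁ := right_mem_Icc.2 h₀₁
  have hM : 2 * a x₁ * b x₁ * M ≤ M :=
    mul_le_of_le_one_left ((abs_nonneg _).trans (hf x₁ h₁).1) (hslope x₁ h₁).2
  have hs₀ := abs_le.1 (hslope_mul x₀ h₀)
  have hs₁ := abs_le.1 (hslope_mul x₁ h₁)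
  have hg₀ := abs_le.1 (hf x₀ h₀).2
  have hg₁ := abs_le.1 (hf x₁ h₁).2
  rw [correctedPrimitive, correctedPrimitive, abs_le] at hincr
  rw [abs_le]
  constructor <;> linarith

lemma IsSolutionOn.norm_le_mul_exp {K : ℝ} (hf : IsSolutionOn q f g (Icc x₀ x₁)) (hK : 1 ≤ K)
    (hq : ∀ x ∈ Icc x₀ x₁, |q x| ≤ K) (hx : x ∈ Icc x₀ x₁) :
    ‖(f x, g x)‖ ≤ ‖(f x₀, g x₀)‖ * Real.exp (K * (x - x₀)) := by
  have hd : ∀ x ∈ Icc x₀ x₁, HasDerivAt (fun x => (f x, g x)) (g x, -q x * f x) x := fun x hx =>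
    (hf.hasDerivAt x hx).prodMk (hf.hasDerivAt_deriv x hx)
  rw [← gronwallBound_ε0]
  refine norm_le_gronwallBound_of_norm_deriv_right_le (HasDerivAt.continuousOn hd)
    (fun x hx => (hd x (Ico_subset_Icc_self hx)).hasDerivWithinAt) le_rfl (fun x hx => ?_) x hx
  rw [add_zero, Prod.norm_mk, max_le_iff, norm_mul, norm_neg]
  exact ⟨(norm_snd_le (f x, g x)).trans (le_mul_of_one_le_left (norm_nonneg _) hK),
    mul_le_mul (hq x (Ico_subset_Icc_self hx)) (norm_fst_le (f x, g x)) (norm_nonneg _)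
      (zero_le_one.trans hK)⟩

namespace IsSolutionOn

variable (hf : IsSolutionOn q f g (Ici x₀)) (hlim : Tendsto (fun x => f x * g x) atTop (𝓝 0))
include hf hlim

lemma mul_nonpos_of_tendsto (hq : ∀ x ∈ Ici x₀, q x ≤ 0) (hx : x ∈ Ici x₀) : f x * g x ≤ 0 := by
  have hanti : AntitoneOn (fun x => -(f x * g x)) (Ici x₀) := by
    refine antitoneOn_of_hasDerivAt_nonpos (convex_Ici x₀) (fun x hx =>
      ((hf.hasDerivAt x hx).fun_mul (hf.hasDerivAt_deriv x hx)).fun_neg) fun x hx => ?_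
    nlinarith [mul_nonneg (neg_nonneg.2 (hq x hx)) (sq_nonneg (f x)), sq_nonneg (g x)]
  refine ge_of_tendsto hlim ?_
  filter_upwards [eventually_ge_atTop x] with y hy
  exact neg_le_neg_iff.1 (hanti hx (hx.trans hy) hy)

lemma abs_deriv_le (hq : ∀ x ∈ Ici x₀, q x ≤ 0) (hx : x ∈ Ici x₀) : |g x| ≤ |g x₀| := by
  have hanti : AntitoneOn (fun x => g x ^ 2) (Ici x₀) := by
    refine antitoneOn_of_hasDerivAt_nonpos (convex_Ici x₀) (fun x hx =>
      (hf.hasDerivAt_deriv x hx).fun_pow 2) fun x hx => ?_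
    have := mul_nonneg_of_nonpos_of_nonpos (hq x hx) (hf.mul_nonpos_of_tendsto hlim hq hx)
    refine (le_of_eq ?_).trans (neg_nonpos.2 (mul_nonneg zero_le_two this))
    push_cast
    ring
  exact sq_le_sq.1 (hanti self_mem_Ici hx hx)

lemma abs_primitive_sub_le {q' : ℝ → ℝ} (hF : ∀ x ∈ Ici x₀, HasDerivAt F (f x) x)
    (hq' : ∀ x ∈ Ici x₀, HasDerivAt q (q' x) x) (hq'_nonpos : ∀ x ∈ Ici x₀, q' x ≤ 0)
    (hq : ∀ x ∈ Ici x₀, q x ≤ -1) (hx : x ∈ Ici x₀) : |F x - F x₀| ≤ 3 * |g x₀| := by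
  have hq₀ : ∀ x ∈ Ici x₀, q x ≠ 0 := fun x hx => by linarith [hq x hx]
  have hg : ∀ x ∈ Ici x₀, |g x| ≤ |g x₀| := fun x hx =>
    hf.abs_deriv_le hlim (fun y hy => by linarith [hq y hy]) hx
  have hincr := norm_sub_le_sub_of_norm_deriv_le (f := fun x => F x + g x / q x)
    (f' := fun x => g x * (-q' x / q x ^ 2)) (B := fun x => |g x₀| * (q x)⁻¹)
    (B' := fun x => |g x₀| * (-q' x / q x ^ 2)) hx
    (fun y hy => ((hF y hy.1).fun_add
      ((hf.hasDerivAt_deriv y hy.1).fun_div (hq' y hy.1) (hq₀ y hy.1))).congr_deriv (by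
        have := hq₀ y hy.1
        field_simp
        ring))
    (fun y hy => ((hq' y hy.1).fun_inv (hq₀ y hy.1)).const_mul _)
    (fun y hy => by
      have : 0 ≤ -q' y := neg_nonneg.2 (hq'_nonpos y hy.1)
      have hw : 0 ≤ -q' y / q y ^ 2 := by positivity
      rw [norm_mul, Real.norm_of_nonneg hw]
      exact mul_le_mul_of_nonneg_right (hg y hy.1) hw)
  have hinv : ∀ x ∈ Ici x₀, -1 ≤ (q x)⁻¹ ∧ (q x)⁻¹ ≤ 0 := fun x hx =>
    ⟨(neg_le_of_neg_le (by rw [← inv_neg]; exact inv_le_one_of_one_le₀ (by linarith [hq x hx]))),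
      inv_nonpos.2 (by linarith [hq x hx])⟩
  have hquot : ∀ x ∈ Ici x₀, |g x / q x| ≤ |g x₀| := fun x hx => by
    have : 1 ≤ |q x| := by rw [le_abs]; right; linarith [hq x hx]
    rw [abs_div]
    exact (div_le_self (abs_nonneg _) this).trans (hg x hx)
  have hB : |g x₀| * (q x)⁻¹ - |g x₀| * (q x₀)⁻¹ ≤ |g x₀| := by
    nlinarith [hinv x hx, hinv x₀ self_mem_Ici, abs_nonneg (g x₀)]
  have hquot_x := abs_le.1 (hquot x hx)
  have hquot_x₀ := abs_le.1 (hquot x₀ self_mem_Ici)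
  rw [Real.norm_eq_abs, abs_le] at hincr
  rw [abs_le]
  constructor <;> linarith

end IsSolutionOn

end WKB

/-! ### The potential of `ψ_n` -/

/-- The potential of the equation `f'' = -q f` satisfied by `ψ_n`, where `N = n^{1/3}`. Its turning
point is at distance `O(1)` from `0`, and its maximum, the centre of symmetry of `ψ_n`, is at
`-2 N²`. -/
noncomputable def edgePotential (N x : ℝ) : ℝ := 1 / (2 * N) - x - x ^ 2 / (4 * N ^ 2)

/-- The WKB amplitude `q^{-1/2}` of `edgePotential`. -/
noncomputable def edgeAmplitude (N x : ℝ) : ℝ := (√(edgePotential N x))⁻¹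

section Edge

variable {N M x : ℝ} {F f g : ℝ → ℝ}

lemma hasDerivAt_edgePotential (N x : ℝ) :
    HasDerivAt (edgePotential N) (-(1 + x / (2 * N ^ 2))) x := by
  refine (((hasDerivAt_id' x).const_sub (1 / (2 * N))).fun_sub
    (((hasDerivAt_id' x).fun_pow 2).div_const (4 * N ^ 2))).congr_deriv ?_
  ring

lemma edgePotential_centre (hN : N ≠ 0) : edgePotential N (-2 * N ^ 2) = N ^ 2 + 1 / (2 * N) := by
  rw [edgePotential]
  field_simp
  ring

lemma one_le_edgePotential (hN : 0 < N) (hx : x ∈ Icc (-2 * N ^ 2) (-2)) :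
    1 ≤ edgePotential N x := by
  have hsq : x ^ 2 / (4 * N ^ 2) ≤ -x / 2 := by
    rw [div_le_iff₀ (by positivity)]
    nlinarith [hx.1, hx.2]
  have : 0 < 1 / (2 * N) := by positivity
  rw [edgePotential]
  linarith [hx.2]

lemma abs_edgePotential_le (hN : 1 ≤ N) (hx : x ∈ Icc (-2) 2) : |edgePotential N x| ≤ 3 := by
  have hN₂ : 1 ≤ N ^ 2 := one_le_pow₀ hN
  have hinv : 1 / (2 * N) ≤ 1 / 2 := one_div_le_one_div_of_le two_pos (by linarith)
  have hsq : x ^ 2 / (4 * N ^ 2) ≤ 1 := by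
    rw [div_le_one (by positivity)]
    nlinarith [hx.1, hx.2]
  have : 0 < 1 / (2 * N) := by positivity
  have : 0 ≤ x ^ 2 / (4 * N ^ 2) := by positivity
  rw [edgePotential, abs_le]
  constructor <;> linarith [hx.1, hx.2]

lemma edgePotential_le_neg_one (hN : 1 ≤ N) (hx : x ∈ Ici 2) : edgePotential N x ≤ -1 := by
  have hinv : 1 / (2 * N) ≤ 1 / 2 := one_div_le_one_div_of_le two_pos (by linarith)
  have : 0 ≤ x ^ 2 / (4 * N ^ 2) := by positivity
  rw [edgePotential]
  linarith [mem_Ici.1 hx]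

lemma exists_isSlowAmplitudeOn_edgeAmplitude (hN : 0 < N) :
    ∃ b c, IsSlowAmplitudeOn (edgePotential N) (edgeAmplitude N) b c (Icc (-2 * N ^ 2) (-2)) := by
  refine ⟨_, _, isSlowAmplitudeOn_inv_sqrt (q'' := fun _ => -(1 / (2 * N ^ 2)))
    (fun x _ => hasDerivAt_edgePotential N x)
    (fun x _ => (((hasDerivAt_id' x).div_const (2 * N ^ 2)).const_add 1).fun_neg)
    (fun x hx => one_le_edgePotential hN hx) (fun x hx => ?_)
    (fun x _ => neg_nonpos.2 (by positivity))⟩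
  have hle : x / (2 * N ^ 2) ≤ 0 := div_nonpos_of_nonpos_of_nonneg (by linarith [hx.2])
    (by positivity)
  have hge : -1 ≤ x / (2 * N ^ 2) := by
    rw [le_div_iff₀ (by positivity)]
    linarith [hx.1]
  constructor <;> linarith

lemma edgeAmplitude_le_one (hN : 0 < N) (hx : x ∈ Icc (-2 * N ^ 2) (-2)) :
    edgeAmplitude N x ≤ 1 :=
  inv_le_one_of_one_le₀ (Real.one_le_sqrt.2 (one_le_edgePotential hN hx))

lemma neg_two_mul_sq_le (hN : 1 ≤ N) : -2 * N ^ 2 ≤ -2 := by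
  linarith [one_le_pow₀ hN (n := 2)]

lemma abs_le_of_wkbEnergy_centre_le (hN : 1 ≤ N) (hM : 0 ≤ M)
    (hf : IsSolutionOn (edgePotential N) f g (Icc (-2 * N ^ 2) (-2)))
    (hW : wkbEnergy (edgeAmplitude N) f g (-2 * N ^ 2) ≤ M ^ 2)
    (hx : x ∈ Icc (-2 * N ^ 2) (-2)) :
    |f x| ≤ 2 * M ∧ |edgeAmplitude N x ^ 2 * g x| ≤ 2 * M := by
  have hN₀ : 0 < N := zero_lt_one.trans_le hN
  obtain ⟨b, c, ha⟩ := exists_isSlowAmplitudeOn_edgeAmplitude hN₀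
  refine abs_le_of_wkbEnergy_le (ha.pos x hx) (edgeAmplitude_le_one hN₀ hx) (by positivity) ?_
  have := ha.wkbEnergy_le hf (convex_Icc _ _) (left_mem_Icc.2 (neg_two_mul_sq_le hN)) hx hx.1
  nlinarith

lemma abs_primitive_sub_le_bulk (hN : 1 ≤ N) (hM : 0 ≤ M) (hF : ∀ x, HasDerivAt F (f x) x)
    (hf : IsSolutionOn (edgePotential N) f g univ)
    (hW : wkbEnergy (edgeAmplitude N) f g (-2 * N ^ 2) ≤ M ^ 2)
    (hx : x ∈ Icc (-2 * N ^ 2) (-2)) : |F x - F (-2 * N ^ 2)| ≤ 8 * M := by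
  have hN₀ : 0 < N := zero_lt_one.trans_le hN
  obtain ⟨b, c, ha⟩ := exists_isSlowAmplitudeOn_edgeAmplitude hN₀
  have hsub : Icc (-2 * N ^ 2) x ⊆ Icc (-2 * N ^ 2) (-2) := Icc_subset_Icc_right hx.2
  have h := (ha.mono hsub).abs_primitive_sub_le (M := 2 * M)
    (fun y hy => edgeAmplitude_le_one hN₀ (hsub hy)) (fun y _ => hF y)
    (fun y hy => abs_le_of_wkbEnergy_centre_le hN hM (hf.mono (subset_univ _)) hW (hsub hy))
    (hf.mono (subset_univ _)) hx.1
  linarith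

lemma norm_le_of_wkbEnergy_centre_le (hN : 1 ≤ N) (hM : 0 ≤ M)
    (hf : IsSolutionOn (edgePotential N) f g univ)
    (hW : wkbEnergy (edgeAmplitude N) f g (-2 * N ^ 2) ≤ M ^ 2) (hx : x ∈ Icc (-2) 2) :
    ‖(f x, g x)‖ ≤ 6 * M * Real.exp 12 := by
  have hN₀ : 0 < N := zero_lt_one.trans_le hN
  have hmem : -2 ∈ Icc (-2 * N ^ 2) (-2) := right_mem_Icc.2 (neg_two_mul_sq_le hN)
  obtain ⟨b, c, ha⟩ := exists_isSlowAmplitudeOn_edgeAmplitude hN₀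
  obtain ⟨hf₀, hg₀⟩ := abs_le_of_wkbEnergy_centre_le hN hM (hf.mono (subset_univ _)) hW hmem
  have hq : |edgePotential N (-2)| ≤ 3 := abs_edgePotential_le hN ⟨le_rfl, by norm_num⟩
  have hstart : ‖(f (-2), g (-2))‖ ≤ 6 * M := by
    refine max_le (hf₀.trans (by linarith)) ?_
    calc |g (-2)| = |edgePotential N (-2)| * |edgeAmplitude N (-2) ^ 2 * g (-2)| := by
          rw [← abs_mul, ← mul_assoc, mul_comm (edgePotential N _), ha.sq_mul _ hmem, one_mul]
      _ ≤ 3 * (2 * M) := by gcongr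
      _ = 6 * M := by ring
  calc ‖(f x, g x)‖ ≤ ‖(f (-2), g (-2))‖ * Real.exp (3 * (x - -2)) :=
        (hf.mono (subset_univ _)).norm_le_mul_exp (by norm_num)
          (fun y hy => abs_edgePotential_le hN hy) hx
    _ ≤ 6 * M * Real.exp 12 := by
        gcongr
        linarith [hx.2]

lemma abs_primitive_sub_le_edge (hN : 1 ≤ N) (hM : 0 ≤ M) (hF : ∀ x, HasDerivAt F (f x) x)
    (hf : IsSolutionOn (edgePotential N) f g univ)
    (hW : wkbEnergy (edgeAmplitude N) f g (-2 * N ^ 2) ≤ M ^ 2) (hx : x ∈ Icc (-2) 2) :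
    |F x - F (-2)| ≤ 24 * M * Real.exp 12 := by
  have h := norm_sub_le_mul_sub_of_norm_deriv_le hx.1 (fun y _ => hF y)
    (C := 6 * M * Real.exp 12) fun y hy => (norm_fst_le (f y, g y)).trans
      (norm_le_of_wkbEnergy_centre_le hN hM hf hW ⟨hy.1, hy.2.trans hx.2⟩)
  have hlen : 6 * M * Real.exp 12 * (x - -2) ≤ 6 * M * Real.exp 12 * 4 := by
    gcongr
    linarith [hx.2]
  rw [Real.norm_eq_abs] at h
  linarith

lemma abs_primitive_sub_le_exterior (hN : 1 ≤ N) (hM : 0 ≤ M) (hF : ∀ x, HasDerivAt F (f x) x)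
    (hf : IsSolutionOn (edgePotential N) f g univ)
    (hlim : Tendsto (fun x => f x * g x) atTop (𝓝 0))
    (hW : wkbEnergy (edgeAmplitude N) f g (-2 * N ^ 2) ≤ M ^ 2) (hx : x ∈ Ici 2) :
    |F x - F 2| ≤ 18 * M * Real.exp 12 := by
  have h := (hf.mono (subset_univ _)).abs_primitive_sub_le hlim (fun y _ => hF y)
    (fun y _ => hasDerivAt_edgePotential N y)
    (fun y hy => neg_nonpos.2 (by
      have := mem_Ici.1 hy
      positivity))
    (fun y hy => edgePotential_le_neg_one hN hy) hx
  have hg : |g 2| ≤ 6 * M * Real.exp 12 := (norm_snd_le (f 2, g 2)).trans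
    (norm_le_of_wkbEnergy_centre_le hN hM hf hW ⟨by norm_num, le_rfl⟩)
  linarith

lemma abs_primitive_sub_centre_le (hN : 1 ≤ N) (hM : 0 ≤ M) (hF : ∀ x, HasDerivAt F (f x) x)
    (hf : IsSolutionOn (edgePotential N) f g univ)
    (hlim : Tendsto (fun x => f x * g x) atTop (𝓝 0))
    (hW : wkbEnergy (edgeAmplitude N) f g (-2 * N ^ 2) ≤ M ^ 2) (hx : -2 * N ^ 2 ≤ x) :
    |F x - F (-2 * N ^ 2)| ≤ 50 * M * Real.exp 12 := by
  have hexp : M ≤ M * Real.exp 12 := le_mul_of_one_le_right hM (Real.one_le_exp (by norm_num))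
  rcases le_total x (-2) with hx₁ | hx₁
  · linarith [abs_primitive_sub_le_bulk hN hM hF hf hW ⟨hx, hx₁⟩]
  have hbulk := abs_primitive_sub_le_bulk hN hM hF hf hW (right_mem_Icc.2 (neg_two_mul_sq_le hN))
  rcases le_total x 2 with hx₂ | hx₂
  · have hedge := abs_primitive_sub_le_edge hN hM hF hf hW ⟨hx₁, hx₂⟩
    linarith [abs_sub_le (F x) (F (-2)) (F (-2 * N ^ 2))]
  · have hedge := abs_primitive_sub_le_edge hN hM hF hf hW (right_mem_Icc.2 (by norm_num))
    have hext := abs_primitive_sub_le_exterior hN hM hF hf hlim hW hx₂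
    linarith [abs_sub_le (F 2) (F (-2)) (F (-2 * N ^ 2)), abs_sub_le (F x) (F 2) (F (-2 * N ^ 2))]

end Edge

/-! ### Hermite polynomials and oscillator functions -/

lemma derivative_hermite_succ (n : ℕ) :
    derivative (hermite (n + 1)) = ((n : ℤ[X]) + 1) * hermite n := by
  induction n with
  | zero => simp
  | succ n ih =>
    rw [hermite_succ (n + 1), derivative_sub, derivative_mul, ih, hermite_succ n]
    simp only [derivative_X, derivative_mul, derivative_add, derivative_natCast, derivative_one]
    push_cast
    ring

/-- The probabilists' Hermite polynomial with real coefficients. -/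
noncomputable def realHermite (n : ℕ) : ℝ[X] := (hermite n).map (Int.castRingHom ℝ)

lemma realHermite_succ (n : ℕ) :
    realHermite (n + 1) = X * realHermite n - derivative (realHermite n) := by
  simp [realHermite, hermite_succ, derivative_map]

lemma derivative_realHermite_succ (n : ℕ) :
    derivative (realHermite (n + 1)) = ((n : ℝ[X]) + 1) * realHermite n := by
  rw [realHermite, realHermite, derivative_map, derivative_hermite_succ]
  simp

lemma derivative_derivative_realHermite (n : ℕ) : derivative (derivative (realHermite n)) =
    X * derivative (realHermite n) - (n : ℝ[X]) * realHermite n := by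
  have h := derivative_realHermite_succ n
  rw [realHermite_succ, derivative_sub, derivative_mul, derivative_X] at h
  linear_combination -h

lemma hermiteP_eq_eval (n : ℕ) (x : ℝ) : hermiteP n x = (realHermite n).eval x := by
  rw [realHermite, eval_map, ← algebraMap_int_eq, ← aeval_def, hermite_eq_deriv_gaussian',
    hermiteP, iteratedDeriv_eq_iterate]
  simp only [neg_div]
  ring

lemma hermiteP_neg (n : ℕ) (x : ℝ) : hermiteP n (-x) = (-1) ^ n * hermiteP n x := by
  have h := iteratedDeriv_comp_neg n (fun t : ℝ => Real.exp (-t ^ 2 / 2)) x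
  simp only [neg_sq, smul_eq_mul] at h
  rw [hermiteP, hermiteP, h, neg_sq]
  have hsign : ((-1 : ℝ) ^ n) * (-1) ^ n = 1 := by rw [← mul_pow]; norm_num
  linear_combination (-(-1 : ℝ) ^ n * Real.exp (x ^ 2 / 2) *
    iteratedDeriv n (fun t => Real.exp (-t ^ 2 / 2)) (-x)) * hsign

lemma eval_zero_realHermite_add_two (n : ℕ) :
    (realHermite (n + 2)).eval 0 = -(n + 1) * (realHermite n).eval 0 := by
  rw [realHermite_succ, derivative_realHermite_succ]
  simp only [eval_sub, eval_mul, eval_X, eval_add, eval_natCast, eval_one]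
  ring

lemma succ_mul_sq_eval_zero_realHermite_le (n : ℕ) :
    (n + 1) * ((realHermite n).eval 0 ^ 2 / n.factorial) ^ 2 ≤ 1 := by
  induction n using Nat.twoStepInduction with
  | zero => simp [realHermite]
  | one => simp [realHermite]
  | more n ih _ =>
    have hrec : (realHermite (n + 2)).eval 0 ^ 2 / ((n + 2).factorial : ℝ) =
        (n + 1) / (n + 2) * ((realHermite n).eval 0 ^ 2 / n.factorial) := by
      have : (n.factorial : ℝ) ≠ 0 := by positivity
      rw [eval_zero_realHermite_add_two, Nat.factorial_succ, Nat.factorial_succ]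
      push_cast
      field_simp
      ring
    have hratio : ((n : ℝ) + 1) * (n + 3) / (n + 2) ^ 2 ≤ 1 := by
      rw [div_le_one (by positivity)]
      nlinarith
    calc (((n + 2 : ℕ) : ℝ) + 1) *
          ((realHermite (n + 2)).eval 0 ^ 2 / ((n + 2).factorial : ℝ)) ^ 2
        = ((n : ℝ) + 1) * (n + 3) / (n + 2) ^ 2 *
          ((n + 1) * ((realHermite n).eval 0 ^ 2 / n.factorial) ^ 2) := by
          rw [hrec]
          push_cast
          field_simp
          ring
      _ ≤ 1 := mul_le_one₀ hratio (by positivity) ih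

/-- The function `p(x) e^{-x²/4}`. -/
noncomputable def polyGauss (p : ℝ[X]) (x : ℝ) : ℝ := p.eval x * Real.exp (-x ^ 2 / 4)

section PolyGauss

variable (p : ℝ[X])

lemma hasDerivAt_polyGauss (x : ℝ) :
    HasDerivAt (polyGauss p) (polyGauss (derivative p - C (1 / 2) * X * p) x) x := by
  have hexp : HasDerivAt (fun x : ℝ => Real.exp (-x ^ 2 / 4))
      (Real.exp (-x ^ 2 / 4) * (-(2 * x) / 4)) x := by
    simpa using (((hasDerivAt_id' x).fun_pow 2).fun_neg.div_const 4).exp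
  refine ((p.hasDerivAt x).fun_mul hexp).congr_deriv ?_
  simp only [polyGauss, eval_sub, eval_mul, eval_C, eval_X]
  ring

lemma tendsto_polyGauss_atTop : Tendsto (polyGauss p) atTop (𝓝 0) := by
  have h := p.tendsto_div_exp_atTop.norm
  rw [norm_zero] at h
  refine squeeze_zero_norm' ?_ h
  filter_upwards [eventually_ge_atTop 4] with x hx
  rw [polyGauss, div_eq_mul_inv (p.eval x), ← Real.exp_neg, norm_mul, norm_mul,
    Real.norm_of_nonneg (Real.exp_nonneg _), Real.norm_of_nonneg (Real.exp_nonneg _)]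
  gcongr
  nlinarith

lemma integrable_polyGauss : Integrable (polyGauss p) := by
  induction p using Polynomial.induction_on' with
  | add p q hp hq =>
    refine (hp.add hq).congr (.of_forall fun x => ?_)
    simp only [polyGauss, Pi.add_apply, eval_add]
    ring
  | monomial n c =>
    refine ((integrable_rpow_mul_exp_neg_mul_sq (b := 1 / 4) (by norm_num) (s := n)
      (neg_one_lt_zero.trans_le n.cast_nonneg)).const_mul c).congr (.of_forall fun x => ?_)
    simp only [polyGauss, eval_monomial, Real.rpow_natCast]
    ring_nf

end PolyGauss

/-- The normalizing constant of the oscillator function `osc n`. -/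
noncomputable def oscCoeff (n : ℕ) : ℝ :=
  (2 * Real.pi) ^ (-(1 : ℝ) / 4) * (n.factorial : ℝ) ^ (-(1 : ℝ) / 2)

section Oscillator

variable (n : ℕ)

lemma oscCoeff_sq_le : oscCoeff n ^ 2 ≤ 1 / n.factorial := by
  have hfact : ((n.factorial : ℝ) ^ (-(1 : ℝ) / 2)) ^ 2 = 1 / n.factorial := by
    rw [← Real.rpow_mul_natCast (by positivity)]
    norm_num [Real.rpow_neg_one]
  have hpi : ((2 * Real.pi) ^ (-(1 : ℝ) / 4)) ^ 2 ≤ 1 :=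
    pow_le_one₀ (by positivity)
      (Real.rpow_le_one_of_one_le_of_nonpos (by linarith [Real.pi_gt_three]) (by norm_num))
  rw [oscCoeff, mul_pow, hfact]
  exact mul_le_of_le_one_left (by positivity) hpi

lemma osc_eq_polyGauss : osc n = polyGauss (C (oscCoeff n) * realHermite n) := by
  funext x
  rw [osc, hermiteP_eq_eval, polyGauss, eval_mul, eval_C, oscCoeff]
  ring

lemma osc_neg (x : ℝ) : osc n (-x) = (-1) ^ n * osc n x := by
  rw [osc, osc, hermiteP_neg, neg_sq]
  ring

lemma hasDerivAt_osc (x : ℝ) : HasDerivAt (osc n) (deriv (osc n) x) x := by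
  rw [osc_eq_polyGauss]
  exact (hasDerivAt_polyGauss _ x).differentiableAt.hasDerivAt

lemma deriv_osc : deriv (osc n) = polyGauss
    (C (oscCoeff n) * (derivative (realHermite n) - C (1 / 2) * X * realHermite n)) := by
  funext x
  rw [osc_eq_polyGauss, (hasDerivAt_polyGauss _ x).deriv, derivative_C_mul]
  congr 1
  ring

lemma hasDerivAt_deriv_osc (x : ℝ) :
    HasDerivAt (deriv (osc n)) ((x ^ 2 / 4 - (n + 1 / 2)) * osc n x) x := by
  rw [deriv_osc, osc_eq_polyGauss]
  refine (hasDerivAt_polyGauss _ x).congr_deriv ?_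
  rw [derivative_C_mul, derivative_sub, derivative_mul, derivative_derivative_realHermite]
  simp only [polyGauss, derivative_mul, derivative_C, derivative_X, eval_sub, eval_add, eval_mul,
    eval_C, eval_X, eval_natCast, eval_zero, eval_one]
  ring

lemma tendsto_osc_mul_deriv_osc_atTop :
    Tendsto (fun x => osc n x * deriv (osc n) x) atTop (𝓝 0) := by
  rw [deriv_osc, osc_eq_polyGauss, ← mul_zero (0 : ℝ)]
  exact (tendsto_polyGauss_atTop _).mul (tendsto_polyGauss_atTop _)

lemma osc_zero : osc n 0 = oscCoeff n * (realHermite n).eval 0 := by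
  simp [osc_eq_polyGauss, polyGauss]

lemma deriv_osc_succ_zero :
    deriv (osc (n + 1)) 0 = oscCoeff (n + 1) * ((n + 1) * (realHermite n).eval 0) := by
  simp [deriv_osc, polyGauss, derivative_realHermite_succ]

lemma sqrt_mul_osc_zero_sq_le : √(n + 1 / 2) * osc n 0 ^ 2 ≤ 1 := by
  set r := (realHermite n).eval 0 ^ 2 / (n.factorial : ℝ) with hr
  have hosc : osc n 0 ^ 2 ≤ r := by
    rw [osc_zero, mul_pow, hr, ← one_div_mul_eq_div]
    exact mul_le_mul_of_nonneg_right (oscCoeff_sq_le n) (sq_nonneg _)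
  calc √(n + 1 / 2) * osc n 0 ^ 2 ≤ √(n + 1) * r := by
        gcongr
        norm_num
    _ ≤ 1 := by
        refine le_of_sq_le_sq ?_ zero_le_one
        rw [mul_pow, Real.sq_sqrt (by positivity), one_pow]
        exact succ_mul_sq_eval_zero_realHermite_le n

lemma deriv_osc_zero_sq_div_sqrt_le (hn : 1 ≤ n) : deriv (osc n) 0 ^ 2 / √(n + 1 / 2) ≤ 1 := by
  obtain ⟨k, rfl⟩ := Nat.exists_eq_add_of_le' hn
  set r := (realHermite k).eval 0 ^ 2 / (k.factorial : ℝ) with hr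
  have hosc : deriv (osc (k + 1)) 0 ^ 2 ≤ (k + 1) * r := by
    rw [deriv_osc_succ_zero, mul_pow]
    refine (mul_le_mul_of_nonneg_right (oscCoeff_sq_le (k + 1)) (sq_nonneg _)).trans_eq ?_
    have : (k.factorial : ℝ) ≠ 0 := by positivity
    rw [Nat.factorial_succ, hr]
    push_cast
    field_simp
  rw [div_le_one (by positivity)]
  refine hosc.trans (Real.le_sqrt_of_sq_le ?_)
  push_cast
  nlinarith [succ_mul_sq_eval_zero_realHermite_le k]

end Oscillator

/-! ### Integrals of `ψ_n` -/

/-- The scale `κ = n^{1/6}`, in terms of which `√n = κ³` and the potential of `ψ_n` is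
`edgePotential (κ²)`. -/
noncomputable def edgeScale (n : ℕ) : ℝ := (n : ℝ) ^ ((1 : ℝ) / 6)

/-- The centre of symmetry of `ψ_n`, the point with `2√n + n^{-1/6} x = 0`. -/
noncomputable def psiCentre (n : ℕ) : ℝ := -2 * (edgeScale n ^ 2) ^ 2

section PsiN

variable {n : ℕ}

lemma edgeScale_pow_six (n : ℕ) : edgeScale n ^ 6 = n := by
  rw [edgeScale, ← Real.rpow_mul_natCast n.cast_nonneg]
  norm_num

lemma one_le_edgeScale (hn : 1 ≤ n) : 1 ≤ edgeScale n :=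
  Real.one_le_rpow (mod_cast hn) (by norm_num)

lemma edgeScale_pos (hn : 1 ≤ n) : 0 < edgeScale n := zero_lt_one.trans_le (one_le_edgeScale hn)

lemma psiN_apply (n : ℕ) (x : ℝ) : psiN n x =
    √(edgeScale n) * osc n (2 * edgeScale n ^ 3 + (edgeScale n)⁻¹ * x) := by
  have hn : (0 : ℝ) ≤ n := n.cast_nonneg
  rw [psiN, psiUp, edgeScale, Real.sqrt_eq_rpow, Real.sqrt_eq_rpow, ← Real.rpow_mul hn,
    ← Real.rpow_mul_natCast hn, ← Real.rpow_neg hn]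
  norm_num

lemma hasDerivAt_psiN (n : ℕ) (x : ℝ) : HasDerivAt (psiN n) (deriv (psiN n) x) x := by
  have hd : Differentiable ℝ (osc n) := fun y => (hasDerivAt_osc n y).differentiableAt
  have h : Differentiable ℝ (psiN n) := by
    rw [funext (psiN_apply n)]
    fun_prop
  exact (h x).hasDerivAt

lemma deriv_psiN (n : ℕ) (x : ℝ) : deriv (psiN n) x = √(edgeScale n) * (edgeScale n)⁻¹ *
    deriv (osc n) (2 * edgeScale n ^ 3 + (edgeScale n)⁻¹ * x) := by
  have h := (((hasDerivAt_osc n _).comp x (((hasDerivAt_id' x).const_mul (edgeScale n)⁻¹).const_add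
    (2 * edgeScale n ^ 3))).const_mul √(edgeScale n)).deriv
  rw [funext (psiN_apply n)]
  refine h.trans ?_
  ring

lemma isSolutionOn_psiN (hn : 1 ≤ n) :
    IsSolutionOn (edgePotential (edgeScale n ^ 2)) (psiN n) (deriv (psiN n)) univ := by
  refine ⟨fun x _ => hasDerivAt_psiN n x, fun x _ => ?_⟩
  have : edgeScale n ≠ 0 := (edgeScale_pos hn).ne'
  have h := ((hasDerivAt_deriv_osc n _).comp x (((hasDerivAt_id' x).const_mul
    (edgeScale n)⁻¹).const_add (2 * edgeScale n ^ 3))).const_mul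
      (√(edgeScale n) * (edgeScale n)⁻¹)
  rw [funext (deriv_psiN n)]
  refine h.congr_deriv ?_
  rw [psiN_apply, edgePotential, ← edgeScale_pow_six n]
  field_simp
  ring

lemma tendsto_psiN_mul_deriv_psiN_atTop (hn : 1 ≤ n) :
    Tendsto (fun x => psiN n x * deriv (psiN n) x) atTop (𝓝 0) := by
  have hκ : 0 < (edgeScale n)⁻¹ := inv_pos.2 (edgeScale_pos hn)
  have haff : Tendsto (fun x => 2 * edgeScale n ^ 3 + (edgeScale n)⁻¹ * x) atTop atTop :=
    tendsto_atTop_add_const_left _ _ (tendsto_id.const_mul_atTop hκ)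
  have h := ((tendsto_osc_mul_deriv_osc_atTop n).comp haff).const_mul
    (√(edgeScale n) * (√(edgeScale n) * (edgeScale n)⁻¹))
  rw [mul_zero] at h
  refine h.congr fun x => ?_
  rw [psiN_apply, deriv_psiN, Function.comp_apply]
  ring

lemma integrable_psiN (hn : 1 ≤ n) : Integrable (psiN n) := by
  have hκ : (edgeScale n)⁻¹ ≠ 0 := inv_ne_zero (edgeScale_pos hn).ne'
  have hosc : Integrable (osc n) := by
    rw [osc_eq_polyGauss]
    exact integrable_polyGauss _
  rw [funext (psiN_apply n)]
  exact ((hosc.comp_add_left (2 * edgeScale n ^ 3)).comp_mul_left' hκ).const_mul _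

lemma affine_psiCentre_eq_zero (hn : 1 ≤ n) :
    2 * edgeScale n ^ 3 + (edgeScale n)⁻¹ * psiCentre n = 0 := by
  have : edgeScale n ≠ 0 := (edgeScale_pos hn).ne'
  rw [psiCentre]
  field_simp
  ring

lemma psiN_reflect (hn : 1 ≤ n) (x : ℝ) :
    psiN n (2 * psiCentre n - x) = (-1) ^ n * psiN n x := by
  rw [psiN_apply, psiN_apply, ← mul_left_comm, ← osc_neg]
  congr 2
  linear_combination 2 * affine_psiCentre_eq_zero hn

lemma edgeAmplitude_psiCentre (hn : 1 ≤ n) :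
    edgeAmplitude (edgeScale n ^ 2) (psiCentre n) = edgeScale n / √(n + 1 / 2) := by
  have hκ : 0 < edgeScale n := edgeScale_pos hn
  have hq : edgePotential (edgeScale n ^ 2) (psiCentre n) =
      (n + 1 / 2) / edgeScale n ^ 2 := by
    rw [psiCentre, edgePotential_centre (by positivity), ← edgeScale_pow_six n]
    field_simp
  rw [edgeAmplitude, hq, Real.sqrt_div (by positivity), Real.sqrt_sq hκ.le, inv_div]

lemma wkbEnergy_psiN_psiCentre_le (hn : 1 ≤ n) :
    wkbEnergy (edgeAmplitude (edgeScale n ^ 2)) (psiN n) (deriv (psiN n)) (psiCentre n) ≤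
      2 ^ 2 := by
  have hκ : 0 < edgeScale n := edgeScale_pos hn
  have : 0 < √((n : ℝ) + 1 / 2) := by positivity
  calc wkbEnergy (edgeAmplitude (edgeScale n ^ 2)) (psiN n) (deriv (psiN n)) (psiCentre n)
      = √(n + 1 / 2) * osc n 0 ^ 2 + deriv (osc n) 0 ^ 2 / √(n + 1 / 2) := by
        rw [wkbEnergy, edgeAmplitude_psiCentre hn, psiN_apply, deriv_psiN,
          affine_psiCentre_eq_zero hn]
        simp only [mul_pow, Real.sq_sqrt hκ.le]
        field_simp
    _ ≤ 2 ^ 2 := by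
        linarith [sqrt_mul_osc_zero_sq_le n, deriv_osc_zero_sq_div_sqrt_le n hn]

lemma continuous_psiN (n : ℕ) : Continuous (psiN n) :=
  continuous_iff_continuousAt.2 fun x => (hasDerivAt_psiN n x).continuousAt

lemma abs_integral_psiCentre_psiN_le_of_le (hn : 1 ≤ n) {x : ℝ}
    (hx : psiCentre n ≤ x) :
    |∫ y in (psiCentre n)..x, psiN n y| ≤ 100 * Real.exp 12 := by
  have h := abs_primitive_sub_centre_le (one_le_pow₀ (one_le_edgeScale hn)) zero_le_two
    (fun y => ((continuous_psiN n).integral_hasStrictDerivAt (psiCentre n) y).hasDerivAt)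
    (isSolutionOn_psiN hn) (tendsto_psiN_mul_deriv_psiN_atTop hn)
    (wkbEnergy_psiN_psiCentre_le hn) hx
  rw [← psiCentre, intervalIntegral.integral_same, sub_zero] at h
  linarith

lemma abs_integral_psiCentre_psiN_le (hn : 1 ≤ n) (x : ℝ) :
    |∫ y in (psiCentre n)..x, psiN n y| ≤ 100 * Real.exp 12 := by
  set z := psiCentre n with hz
  rcases le_total z x with hx | hx
  · exact abs_integral_psiCentre_psiN_le_of_le hn hx
  have hreflect : ∫ y in z..x, psiN n (2 * z - y) = -∫ y in z..(2 * z - x), psiN n y := by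
    rw [intervalIntegral.integral_comp_sub_left, ← intervalIntegral.integral_symm, two_mul,
      add_sub_cancel_right]
  simp only [hz, psiN_reflect hn, intervalIntegral.integral_const_mul] at hreflect
  calc |∫ y in z..x, psiN n y| = |(-1) ^ n * ∫ y in z..x, psiN n y| := by
        rw [abs_mul, abs_neg_one_pow, one_mul]
    _ = |∫ y in z..(2 * z - x), psiN n y| := by rw [hreflect, abs_neg]
    _ ≤ 100 * Real.exp 12 := abs_integral_psiCentre_psiN_le_of_le hn (by linarith)

lemma abs_integral_psiN_le (hn : 1 ≤ n) (a b : ℝ) :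
    |∫ y in a..b, psiN n y| ≤ 200 * Real.exp 12 := by
  have hint : ∀ x y, IntervalIntegrable (psiN n) volume x y :=
    (continuous_psiN n).intervalIntegrable
  rw [← intervalIntegral.integral_interval_sub_left (hint (psiCentre n) b) (hint _ a)]
  refine (abs_sub _ _).trans ?_
  linarith [abs_integral_psiCentre_psiN_le hn a, abs_integral_psiCentre_psiN_le hn b]

end PsiN

lemma integral_sign_sub_mul {f : ℝ → ℝ} (hf : Integrable f) (x : ℝ) :
    ∫ y, Real.sign (x - y) * f y = (∫ y in Iic x, f y) - ∫ y in Ioi x, f y := by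
  have hind : (fun y => Real.sign (x - y) * f y) =ᵐ[volume]
      fun y => (Iic x).indicator f y - (Ioi x).indicator f y := by
    filter_upwards [Measure.ae_ne volume x] with y hy
    rcases hy.lt_or_gt with hlt | hgt
    · simp [Real.sign_of_pos (sub_pos.2 hlt), hlt.le, hlt.not_gt]
    · simp [Real.sign_of_neg (sub_neg.2 hgt), hgt, hgt.not_ge]
  rw [integral_congr_ae hind, integral_sub (hf.indicator measurableSet_Iic)
    (hf.indicator measurableSet_Ioi), integral_indicator measurableSet_Iic,
    integral_indicator measurableSet_Ioi]

lemma abs_epsF_le {f : ℝ → ℝ} {M : ℝ} (hf : Integrable f) (h : ∀ a b, |∫ y in a..b, f y| ≤ M)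
    (x : ℝ) : |epsF f x| ≤ M := by
  have hIic : |∫ y in Iic x, f y| ≤ M := le_of_tendsto
    (intervalIntegral_tendsto_integral_Iic x hf.integrableOn tendsto_id).abs
    (.of_forall fun a => h a x)
  have hIoi : |∫ y in Ioi x, f y| ≤ M := le_of_tendsto
    (intervalIntegral_tendsto_integral_Ioi x hf.integrableOn tendsto_id).abs
    (.of_forall fun b => h x b)
  rw [epsF, integral_sign_sub_mul hf, abs_mul, abs_of_pos one_half_pos]
  linarith [abs_sub (∫ y in Iic x, f y) (∫ y in Ioi x, f y)]

/-- uniform bounds on `εψ_n` and on primitives of `ψ_n`. -/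
theorem epsPsi_bounds :
    (∃ C : ℝ, 0 < C ∧ ∀ n : ℕ, 1 ≤ n → ∀ x : ℝ, |epsPsi n x| ≤ C) ∧
    (∀ a : ℝ, ∃ C : ℝ, 0 < C ∧ ∀ n : ℕ, 1 ≤ n → ∀ x : ℝ,
      |∫ y in a..x, psiN n y| ≤ C) := by
  have hC : 0 < 200 * Real.exp 12 := by positivity
  exact ⟨⟨_, hC, fun n hn => abs_epsF_le (integrable_psiN hn) (abs_integral_psiN_le hn)⟩,
    fun a => ⟨_, hC, fun n hn => abs_integral_psiN_le hn a⟩⟩
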